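/- Multizip commutes with projections: for all multisets m : Sym X K and n : Sym Y K, PMF.map (Sym.map Prod.fst) (mzip m n) = PMF.pure m, and symmetrically PMF.map (Sym.map Prod.snd) (mzip m n) = PMF.pure n. -/

import Mathlib

universe u

/-- Accumulation: send a tuple to its multiset of values. -/
def acc {X : Type u} {K : ℕ} (v : Fin K → X) : Sym X K :=
  ⟨(List.ofFn v : List X), by simp⟩

/-- Pushforward of the uniform distribution on permutations under `σ ↦ v ∘ σ`. -/
noncomputable def perm {X : Type u} {K : ℕ} (v : Fin K → X) : PMF (Fin K → X) :=
  PMF.map (fun σ => v ∘ σ) (PMF.uniformOfFintype (Equiv.Perm (Fin K)))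

theorem acc_surj {X : Type u} {K : ℕ} (m : Sym X K) : ∃ v : Fin K → X, acc v = m := by
  obtain ⟨s, hs⟩ := m
  induction s using Quotient.inductionOn with
  | h l =>
    have hl : l.length = K := by simpa using hs
    subst hl
    exact ⟨l.get, Subtype.ext (by simp [acc])⟩

theorem acc_comp_perm {X : Type u} {K : ℕ} (v : Fin K → X) (σ : Equiv.Perm (Fin K)) :
    acc (v ∘ σ) = acc v :=
  Subtype.ext (Multiset.coe_eq_coe.2 (Equiv.Perm.ofFn_comp_perm σ v))

theorem map_acc {X Y : Type u} {K : ℕ} (f : X → Y) (v : Fin K → X) :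
    Sym.map f (acc v) = acc (fun i => f (v i)) := by
  apply Subtype.ext
  simp [acc, Sym.map, List.map_ofFn, Function.comp_def]

theorem map_acc_perm {X : Type u} {K : ℕ} (v : Fin K → X) :
    PMF.map acc (perm v) = PMF.pure (acc v) := by
  have hp : perm v = PMF.map (fun σ : Equiv.Perm (Fin K) => v ∘ (σ : Fin K → Fin K))
      (PMF.uniformOfFintype (Equiv.Perm (Fin K))) := by
    change PMF.map _ (PMF.map (fun σ : Equiv.Perm (Fin K) => (σ : Fin K → Fin K)) _) = _
    rw [PMF.map_comp]
    rfl
  have h : (acc ∘ fun σ : Equiv.Perm (Fin K) => v ∘ (σ : Fin K → Fin K))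
      = Function.const _ (acc v) := by
    funext σ
    exact acc_comp_perm v σ
  rw [hp, PMF.map_comp, h, PMF.map_const]

/-- Multizip commutes with projections: mapping the first (resp. second)
projection elementwise over
`mzip m n = (arr m).bind (fun a => PMF.map (fun b => acc (fun i => (a i, b i))) (arr n))`
gives the Dirac distribution at `m` (resp. `n`). -/
theorem mzip_proj {X Y : Type u} {K : ℕ}
    (arr : {Z : Type u} → {n : ℕ} → Sym Z n → PMF (Fin n → Z))
    (harr : ∀ {Z : Type u} {n : ℕ} (v : Fin n → Z), arr (acc v) = perm v)
    (m : Sym X K) (n : Sym Y K) :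
    PMF.map (Sym.map Prod.fst)
        ((arr m).bind (fun a => PMF.map (fun b => acc (fun i => (a i, b i))) (arr n))) =
      PMF.pure m ∧
    PMF.map (Sym.map Prod.snd)
        ((arr m).bind (fun a => PMF.map (fun b => acc (fun i => (a i, b i))) (arr n))) =
      PMF.pure n := by
  obtain ⟨v, rfl⟩ := acc_surj m
  obtain ⟨w, rfl⟩ := acc_surj n
  rw [harr, harr]
  constructor
  · have h : ∀ a : Fin K → X, (Sym.map Prod.fst ∘ fun b : Fin K → Y => acc (fun i => (a i, b i)))
        = Function.const _ (acc a) := by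
      intro a
      funext b
      exact map_acc _ _
    simp only [PMF.map_bind, PMF.map_comp, h, PMF.map_const]
    exact map_acc_perm v
  · have h : ∀ a : Fin K → X, (Sym.map Prod.snd ∘ fun b : Fin K → Y => acc (fun i => (a i, b i)))
        = acc := by
      intro a
      funext b
      exact map_acc _ _
    simp only [PMF.map_bind, PMF.map_comp, h, map_acc_perm, PMF.bind_const]
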